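/- Let n ≥ 4, let G = (Z/nZ) × (Z/nZ), let k ∈ [2, n-2], and let S be a sequence over G with |S| = 2n-2+k and no nonempty zero-sum subsequence of length at most 2n-1-k. Suppose there are e1, e2 ∈ G with supp(S) ⊆ {e1} ∪ (⟨e1⟩ + e2). Then there exists f2 ∈ ⟨e1⟩ + e2 such that (e1, f2) is a basis for G and S = e1^{[n-1]} · f2^{[n-1]} · (e1+f2)^{[k]}. -/

import Mathlib

/-- `(e1, e2)` is a basis for `(ZMod n)²`: the map `(a,b) ↦ a•e1 + b•e2` is bijective. -/
def IsBasis {N : ℕ} (e1 e2 : ZMod N × ZMod N) : Prop :=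
  Function.Bijective (fun p : ZMod N × ZMod N => p.1 • e1 + p.2 • e2)

open scoped Pointwise in
/-- **Scherk's theorem** on sumsets in which `0` is only represented trivially. -/
theorem card_add_card_le_card_add_add_one {G : Type*} [AddCommGroup G] [Finite G] [DecidableEq G]
    (A B : Finset G) (hA : 0 ∈ A) (hB : 0 ∈ B) (h : ∀ a ∈ A, ∀ b ∈ B, a + b = 0 → b = 0) :
    A.card + B.card ≤ (A + B).card + 1 := by
  induction hm : B.card using Nat.strong_induction_on generalizing A B with
  | _ m ih =>
  subst hm
  by_cases H : ∃ a ∈ A, ∃ b ∈ B, a + b ∉ A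
  · obtain ⟨a, ha, b, hb, hab⟩ := H
    set X := B.image (a + ·) with hX
    set B' := B.filter (fun b => a + b ∈ A) with hB'
    have hXc : X.card = B.card := Finset.card_image_of_injective _ (add_right_injective a)
    have hinter : A ∩ X = B'.image (a + ·) := by
      ext x
      simp only [hX, hB', Finset.mem_inter, Finset.mem_image, Finset.mem_filter]
      constructor
      · rintro ⟨hx, c, hc, rfl⟩
        exact ⟨c, ⟨hc, hx⟩, rfl⟩
      · rintro ⟨c, ⟨hc, hx⟩, rfl⟩
        exact ⟨hx, c, hc, rfl⟩
    have hic : (A ∩ X).card = B'.card := by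
      rw [hinter]; exact Finset.card_image_of_injective _ (add_right_injective a)
    have hui := Finset.card_union_add_card_inter A X
    have hlt : B'.card < B.card := by
      refine Finset.card_lt_card ⟨Finset.filter_subset _ _, fun hs => ?_⟩
      exact hab (Finset.mem_filter.1 (hs hb)).2
    have hsub : (A ∪ X) + B' ⊆ A + B := by
      intro z hz
      obtain ⟨x, hx, y, hy, rfl⟩ := Finset.mem_add.1 hz
      obtain ⟨hyB, hyA⟩ := Finset.mem_filter.1 hy
      rcases Finset.mem_union.1 hx with hx | hx
      · exact Finset.add_mem_add hx hyB
      · obtain ⟨c, hc, rfl⟩ := Finset.mem_image.1 hx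
        have : a + c + y = (a + y) + c := by abel
        rw [this]
        exact Finset.add_mem_add hyA hc
    have := ih B'.card hlt (A ∪ X) B' (Finset.mem_union_left _ hA)
      (Finset.mem_filter.2 ⟨hB, by simpa using ha⟩) (by
        intro x hx y hy hxy
        obtain ⟨hyB, hyA⟩ := Finset.mem_filter.1 hy
        rcases Finset.mem_union.1 hx with hx | hx
        · exact h x hx y hyB hxy
        · obtain ⟨c, hc, rfl⟩ := Finset.mem_image.1 hx
          have hc0 : c = 0 := h _ hyA c hc (by rw [← hxy]; abel)
          subst hc0
          exact h a ha y hyB (by simpa using hxy)) rfl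
    have h3 := Finset.card_le_card hsub
    omega
  · push Not at H
    have hB1 : B ⊆ {0} := by
      intro b hb
      have hmul : ∀ i : ℕ, i • b ∈ A := by
        intro i
        induction i with
        | zero => simpa using hA
        | succ i hi => rw [succ_nsmul]; exact H _ hi b hb
      have hpos := addOrderOf_pos b
      have h0 : (addOrderOf b - 1) • b + b = 0 := by
        rw [← succ_nsmul, Nat.sub_add_cancel hpos, addOrderOf_nsmul_eq_zero]
      exact Finset.mem_singleton.2 (h _ (hmul _) b hb h0)
    have h1 := Finset.card_le_card hB1
    have h2 : A.card ≤ (A + B).card := Finset.card_le_card fun x hx => by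
      simpa using Finset.add_mem_add hx hB
    simp only [Finset.card_singleton] at h1
    omega

open scoped Pointwise in
/-- A sequence with multiplicities at most `h` and no short zero-sum subsequence has many
short subsequence sums. -/
theorem exists_short_sums {G : Type*} [AddCommGroup G] [Finite G] [DecidableEq G]
    (h : ℕ) (T : Multiset G) (hc : ∀ x, T.count x ≤ h)
    (hz : ∀ V ≤ T, V ≠ 0 → V.card ≤ h → V.sum ≠ 0) :
    ∃ C : Finset G, T.card + 1 ≤ C.card ∧ ∀ c ∈ C, ∃ V ≤ T, V.card ≤ h ∧ V.sum = c := by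
  suffices ∃ C : Finset G, 0 ∈ C ∧ T.card + 1 ≤ C.card ∧
      ∀ c ∈ C, ∃ V ≤ T, V.card ≤ h ∧ V.sum = c by
    obtain ⟨C, -, hC⟩ := this
    exact ⟨C, hC⟩
  induction h generalizing T with
  | zero =>
    have hT : T = 0 := Multiset.eq_zero_of_forall_notMem fun x hx => by
      have := Multiset.count_pos.2 hx
      have := hc x
      omega
    subst hT
    exact ⟨{0}, by simp, by simp, fun c hc => ⟨0, by simp, by simp, by simpa [eq_comm] using hc⟩⟩
  | succ h ih =>
    have hle : T.dedup ≤ T := Multiset.dedup_le T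
    have hsplit : T - T.dedup + T.dedup = T := Multiset.sub_add_cancel hle
    have hRT : T - T.dedup ≤ T := Multiset.sub_le_self _ _
    obtain ⟨C, hC0, hCc, hCs⟩ := ih (T - T.dedup) (fun x => by
        rw [Multiset.count_sub, Multiset.count_dedup]
        have := hc x
        split_ifs with hx
        · omega
        · rw [Multiset.count_eq_zero_of_notMem hx]; omega)
      (fun V hV h0 hVc => hz V (hV.trans hRT) h0 (by omega))
    have hT0 : (0 : G) ∉ T := fun h0 =>
      hz {0} (Multiset.singleton_le.2 h0) (by simp) (by simp) (by simp)
    have key : ∀ c ∈ C, ∀ b ∈ T, ∃ V ≤ T, V ≠ 0 ∧ V.card ≤ h + 1 ∧ V.sum = c + b := by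
      intro c hcC b hb
      obtain ⟨V, hV, hVc, rfl⟩ := hCs c hcC
      refine ⟨V + {b}, ?_, by simp, by simpa using hVc, by simp⟩
      rw [← hsplit]
      exact add_le_add hV (Multiset.singleton_le.2 (Multiset.mem_dedup.2 hb))
    refine ⟨C + insert 0 T.toFinset,
      by simpa using Finset.add_mem_add hC0 (Finset.mem_insert_self 0 T.toFinset), ?_, ?_⟩
    · have h1 := card_add_card_le_card_add_add_one C (insert 0 T.toFinset) hC0
        (Finset.mem_insert_self _ _) (by
          intro c hcC b hb hcb
          rcases Finset.mem_insert.1 hb with hb | hb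
          · exact hb
          · obtain ⟨V, hV, hV0, hVc, hVs⟩ := key c hcC b (Multiset.mem_toFinset.1 hb)
            exact absurd (hVs.trans hcb) (hz V hV hV0 hVc))
      rw [Finset.card_insert_of_notMem (by simpa using hT0)] at h1
      have h2 : T.toFinset.card = T.dedup.card := rfl
      have h3 := congrArg Multiset.card hsplit
      rw [Multiset.card_add] at h3
      omega
    · intro z hz'
      obtain ⟨c, hcC, b, hb, rfl⟩ := Finset.mem_add.1 hz'
      rcases Finset.mem_insert.1 hb with rfl | hb
      · obtain ⟨V, hV, hVc, rfl⟩ := hCs c hcC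
        exact ⟨V, hV.trans hRT, by omega, by simp⟩
      · obtain ⟨V, hV, -, hVc, hVs⟩ := key c hcC b (Multiset.mem_toFinset.1 hb)
        exact ⟨V, hV, hVc, hVs⟩

/-- If `T` has no zero-sum subsequence with length in `[n - h, n)`, then a zero-sum subsequence of
length less than `n - h` can be removed so that no short zero-sum subsequence remains. -/
theorem exists_sub_no_short_zero_sum {G : Type*} [AddCommGroup G] [DecidableEq G]
    (n h : ℕ) (hn : h < n) (T : Multiset G)
    (hz : ∀ V ≤ T, V.sum = 0 → n ≤ V.card + h → n ≤ V.card) :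
    ∃ U ≤ T, U.card + h < n ∧ ∀ V ≤ T - U, V ≠ 0 → V.card ≤ h → V.sum ≠ 0 := by
  classical
  let P : ℕ → Prop := fun u => ∃ U ≤ T, U.sum = 0 ∧ U.card = u ∧ u + h < n
  have h0 : P 0 := ⟨0, Multiset.zero_le _, by simp, by simp, by omega⟩
  obtain ⟨U, hU, hUs, hUc, hlt⟩ := Nat.findGreatest_spec (P := P) (Nat.zero_le n) h0
  refine ⟨U, hU, by omega, fun V hV hV0 hVc hVs => ?_⟩
  have hUV : U + V ≤ T := by
    rw [← add_tsub_cancel_of_le hU]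
    exact add_le_add le_rfl hV
  have hpos : 0 < V.card := Multiset.card_pos.2 hV0
  have hs : (U + V).sum = 0 := by simp [hUs, hVs]
  by_cases hc : n ≤ (U + V).card + h
  · have := hz _ hUV hs hc
    rw [Multiset.card_add] at this
    omega
  · have hle : (U + V).card ≤ Nat.findGreatest P n :=
      Nat.le_findGreatest (by omega) ⟨U + V, hUV, hs, rfl, by omega⟩
    rw [Multiset.card_add] at hle
    omega

theorem Multiset.exists_le_card_eq_of_le_card {α : Type*} (s : Multiset α) (k : ℕ)
    (hk : k ≤ s.card) : ∃ t ≤ s, t.card = k := by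
  induction s using Quotient.inductionOn with
  | _ l =>
    refine ⟨(l.take k : List α), (List.take_sublist k l).subperm, ?_⟩
    simpa using hk

theorem Multiset.exists_le_map_eq_of_le_map {α β : Type*} (f : α → β) (s : Multiset α)
    (t : Multiset β) (ht : t ≤ s.map f) : ∃ u ≤ s, u.map f = t := by
  have h : t ∈ Multiset.powersetCard t.card (s.map f) := Multiset.mem_powersetCard.2 ⟨ht, rfl⟩
  rw [Multiset.powersetCard_map, Multiset.mem_map] at h
  obtain ⟨u, hu, rfl⟩ := h
  exact ⟨u, (Multiset.mem_powersetCard.1 hu).1, rfl⟩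

/-- If translating an interval of length between `2` and `n - 2` in `ZMod n` pushes out at most one
element, then the translation is by `1` or `-1`. -/
theorem ZMod.eq_one_or_eq_neg_one_of_translate {n r : ℕ} [NeZero n] (hr : 1 ≤ r) (hrn : r + 3 ≤ n)
    (d q e : ZMod n) (hd : d ≠ 0)
    (h : ∀ y : ZMod n, (y - q).val ≤ r → r < (y + d - q).val → y = e) : d = 1 ∨ d = -1 := by
  have key : ∀ j : ℕ, j < n → j ≤ r → r < (j + d.val) % n → q + (j : ZMod n) = e := by
    intro j hjn hj hj'
    have hjv : ((j : ZMod n)).val = j := ZMod.val_natCast_of_lt hjn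
    refine h _ (by rwa [add_sub_cancel_left, hjv]) ?_
    have : q + (j : ZMod n) + d - q = j + d := by ring
    rwa [this, ZMod.val_add, hjv]
  have two : ∀ j : ℕ, j + 1 ≤ r → r < (j + d.val) % n → r < (j + 1 + d.val) % n → False := by
    intro j hj h1 h2
    have e1 := key j (by omega) (by omega) h1
    have e2 := key (j + 1) (by omega) (by omega) h2
    have : ((j : ℕ) : ZMod n) = ((j + 1 : ℕ) : ZMod n) := add_left_cancel (e1.trans e2.symm)
    have := congrArg ZMod.val this
    rw [ZMod.val_natCast_of_lt (by omega), ZMod.val_natCast_of_lt (by omega)] at this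
    omega
  have hlt := ZMod.val_lt d
  have h0 : d.val ≠ 0 := fun h0 => hd ((ZMod.val_eq_zero d).1 h0)
  by_contra! hne
  have h1 : d.val ≠ 1 := by
    intro h1
    apply hne.1
    rw [← ZMod.natCast_zmod_val d, h1, Nat.cast_one]
  have h2 : d.val ≠ n - 1 := by
    intro h2
    apply hne.2
    rw [← ZMod.natCast_zmod_val d, h2, Nat.cast_sub (by omega)]
    simp
  by_cases hc : d.val + r + 2 ≤ n
  · refine two (r - 1) (by omega) ?_ ?_
    · rw [Nat.mod_eq_of_lt (by omega)]; omega
    · rw [Nat.mod_eq_of_lt (by omega)]; omega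
  · refine two (n - 2 - d.val) (by omega) ?_ ?_
    · rw [Nat.mod_eq_of_lt (by omega)]; omega
    · rw [Nat.mod_eq_of_lt (by omega)]; omega

theorem ZMod.card_filter_val_sub_le {n : ℕ} [NeZero n] (q : ZMod n) (r : ℕ) :
    (Finset.univ.filter fun x : ZMod n => (x - q).val ≤ r).card ≤ r + 1 := by
  rw [← Finset.card_range (r + 1)]
  refine Finset.card_le_card_of_injOn (fun x => (x - q).val) (fun x hx => ?_) fun x _ y _ hxy => ?_
  · have := (Finset.mem_filter.1 hx).2
    simp only [Finset.coe_range, Set.mem_Iio]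
    omega
  · exact sub_left_injective (ZMod.val_injective n hxy)

/-- If the `r`-term sums of a sequence of length `n + r` over `ZMod n` lie in an interval of length
`r + 1`, no `n`-term sum vanishes and `0` has maximal multiplicity, then all terms are `0` or a
fixed element `±1`. -/
theorem ZMod.eq_zero_or_eq_of_sums_mem_interval_of_count_le {n r : ℕ} [NeZero n] (hr : 1 ≤ r)
    (hrn : r + 3 ≤ n) (W : Multiset (ZMod n)) (hW : W.card = n + r)
    (hmax : ∀ x, W.count x ≤ W.count 0) (hn : ∀ V ≤ W, V.card = n → V.sum ≠ 0)
    (q : ZMod n) (hq : ∀ V ≤ W, V.card = r → (V.sum - q).val ≤ r) :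
    ∃ d : ZMod n, (d = 1 ∨ d = -1) ∧ ∀ x ∈ W, x = 0 ∨ x = d := by
  set h := W.count 0 with hh
  set T := W.filter (fun x => ¬ x = 0) with hT
  have hWT : Multiset.replicate h 0 + T = W := by
    rw [hh, ← Multiset.filter_eq', hT]
    exact Multiset.filter_add_not _ W
  have hTc : h + T.card = n + r := by
    rw [← hW, ← hWT, Multiset.card_add, Multiset.card_replicate]
  have hTcount : ∀ x, T.count x ≤ h := fun x =>
    (Multiset.count_le_of_le x (Multiset.filter_le _ W)).trans (hmax x)
  have hT0 : ∀ x ∈ T, x ≠ 0 := fun x hx => (Multiset.mem_filter.1 hx).2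
  have hhn : h < n := by
    by_contra! hge
    refine hn (Multiset.replicate n 0) ?_ (by simp) (by simp)
    rw [← hWT]
    exact ((Multiset.replicate_le_replicate 0).2 hge).trans (Multiset.le_add_right _ _)
  have hext : ∀ V ≤ T, ∀ m, V.card ≤ m → m ≤ V.card + h →
      ∃ V' ≤ W, V'.card = m ∧ V'.sum = V.sum := by
    intro V hV m h1 h2
    refine ⟨Multiset.replicate (m - V.card) 0 + V, ?_, by simp; omega, by simp⟩
    rw [← hWT]
    exact add_le_add ((Multiset.replicate_le_replicate 0).2 (by omega)) hV
  have hI : ∀ V ≤ T, V.card ≤ r → r ≤ V.card + h → (V.sum - q).val ≤ r := by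
    intro V hV h1 h2
    obtain ⟨V', hV', hc, hs⟩ := hext V hV r h1 h2
    rw [← hs]
    exact hq V' hV' hc
  obtain ⟨U, hU, hUc, hUz⟩ := exists_sub_no_short_zero_sum n h hhn T (by
    intro V hV hs hc
    by_contra! hlt
    obtain ⟨V', hV', hc', hs'⟩ := hext V hV n hlt.le hc
    exact hn V' hV' hc' (hs'.trans hs))
  set T' := T - U with hT'
  have hUT : U + T' = T := add_tsub_cancel_of_le hU
  have hUT' : U.card + T'.card = T.card := by rw [← hUT, Multiset.card_add]
  have hT'T : T' ≤ T := tsub_le_self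
  -- short subsequence sums together with a fixed part cannot exceed the interval
  have hcontra : ∀ F R : Multiset (ZMod n), F + R ≤ T → R ≤ T' → ∀ m, m ≤ h →
      (∀ x, R.count x ≤ m) → F.card + m = r → r ≤ F.card + h → r + 1 ≤ R.card → False := by
    intro F R hFR hR m hm hcnt h1 h2 h3
    obtain ⟨C, hCc, hC⟩ := exists_short_sums m R hcnt
      (fun V hV h0 hVm => hUz V (hV.trans hR) h0 (hVm.trans hm))
    have hsub : C.image (F.sum + ·) ⊆ Finset.univ.filter fun x : ZMod n => (x - q).val ≤ r := by
      intro z hz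
      obtain ⟨c, hc, rfl⟩ := Finset.mem_image.1 hz
      obtain ⟨V, hV, hVm, rfl⟩ := hC c hc
      have := hI (F + V) ((add_le_add le_rfl hV).trans hFR) (by simp; omega) (by simp; omega)
      simpa using this
    have h4 := Finset.card_le_card hsub
    rw [Finset.card_image_of_injective _ (add_right_injective _)] at h4
    have h5 := ZMod.card_filter_val_sub_le q r
    omega
  have hrh : r ≤ h := by
    by_contra! hlt
    by_cases hu : r - h ≤ U.card
    · obtain ⟨F, hF, hFc⟩ := Multiset.exists_le_card_eq_of_le_card U (r - h) hu
      exact hcontra F T' (hUT ▸ add_le_add hF le_rfl) le_rfl h le_rfl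
        (fun x => (Multiset.count_le_of_le x hT'T).trans (hTcount x)) (by omega) (by omega)
        (by omega)
    · obtain ⟨F, hF, hFc⟩ := Multiset.exists_le_card_eq_of_le_card T' (r - h - U.card) (by omega)
      have hFT : F + (T' - F) = T' := add_tsub_cancel_of_le hF
      have hFT' : F.card + (T' - F).card = T'.card := by rw [← hFT, Multiset.card_add, hFT]
      exact hcontra (U + F) (T' - F) (by rw [add_assoc, hFT, hUT]) tsub_le_self h le_rfl
        (fun x => (Multiset.count_le_of_le x (tsub_le_self.trans hT'T)).trans (hTcount x))
        (by rw [Multiset.card_add]; omega) (by rw [Multiset.card_add]; omega) (by omega)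
  have hT'r : r + 1 ≤ T'.card := by omega
  obtain ⟨d, hd⟩ : ∃ d, d ∈ T' := Multiset.card_pos_iff_exists_mem.1 (by omega)
  have hall : ∀ y ∈ T', y = d := by
    intro y hy
    by_contra hyd
    obtain ⟨Y, hY⟩ := Multiset.exists_cons_of_mem hd
    have hyY : y ∈ Y := by
      rw [hY] at hy
      exact (Multiset.mem_cons.1 hy).resolve_left hyd
    obtain ⟨Z, hZ⟩ := Multiset.exists_cons_of_mem hyY
    have hTc' : T'.card = Z.card + 2 := by rw [hY, hZ]; simp
    obtain ⟨R, hR, hRc⟩ := Multiset.exists_le_card_eq_of_le_card Z (r - 1) (by omega)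
    have hle : d ::ₘ y ::ₘ R ≤ T' := by
      rw [hY, hZ]
      exact Multiset.cons_le_cons _ (Multiset.cons_le_cons _ hR)
    refine hcontra 0 (d ::ₘ y ::ₘ R) (by simpa using hle.trans hT'T) hle r hrh (fun x => ?_)
      (by simp) (by simpa using hrh) (by simp; omega)
    have := Multiset.count_le_card x R
    rw [Multiset.count_cons, Multiset.count_cons]
    split_ifs with h1 h2
    · exact absurd (h1.symm.trans h2).symm (by simpa [eq_comm] using hyd)
    all_goals omega
  have hT'rep : T' = Multiset.replicate T'.card d := Multiset.eq_replicate_card.2 hall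
  have hrep : ∀ i ≤ r + 1, Multiset.replicate i d ≤ T' := fun i hi => by
    rw [hT'rep]
    exact (Multiset.replicate_le_replicate d).2 (by omega)
  have hinj : ∀ i j, i < j → j ≤ r → i • d ≠ j • d := by
    intro i j hij hj he
    refine hUz (Multiset.replicate (j - i) d) (hrep _ (by omega)) ?_ (by simp; omega) ?_
    · rw [← Multiset.card_pos]; simp; omega
    · rw [Multiset.sum_replicate, sub_nsmul _ hij.le, he]; simp
  set J := Finset.univ.filter fun x : ZMod n => (x - q).val ≤ r with hJ
  set D := (Finset.range (r + 1)).image (fun i => i • d) with hD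
  have hDJ : D = J := by
    refine Finset.eq_of_subset_of_card_le (fun z hz => ?_) ?_
    · obtain ⟨i, hi, rfl⟩ := Finset.mem_image.1 hz
      rw [Finset.mem_range] at hi
      have := hI (Multiset.replicate i d) ((hrep i (by omega)).trans hT'T) (by simp; omega)
        (by simp; omega)
      rw [Multiset.sum_replicate] at this
      simpa [hJ] using this
    · rw [hD, Finset.card_image_of_injOn, Finset.card_range]
      · exact ZMod.card_filter_val_sub_le q r
      · intro i hi j hj hij
        simp only [Finset.coe_range, Set.mem_Iio] at hi hj
        rcases lt_trichotomy i j with hlt | heq | hlt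
        · exact absurd hij (hinj i j hlt (by omega))
        · exact heq
        · exact absurd hij.symm (hinj j i hlt (by omega))
  have hmemJ : ∀ x, (x - q).val ≤ r ↔ ∃ i ≤ r, i • d = x := by
    intro x
    have : (x - q).val ≤ r ↔ x ∈ J := by simp [hJ]
    rw [this, ← hDJ, hD]
    simp
  have hd0 : d ≠ 0 := hT0 d (Multiset.mem_of_le hT'T hd)
  have hd1 : d = 1 ∨ d = -1 := by
    refine ZMod.eq_one_or_eq_neg_one_of_translate hr hrn d q (r • d) hd0 fun y hy hyd => ?_
    obtain ⟨i, hi, rfl⟩ := (hmemJ y).1 hy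
    rcases hi.lt_or_eq with hlt | rfl
    · exact absurd ((hmemJ _).2 ⟨i + 1, hlt, succ_nsmul d i⟩) (by omega)
    · rfl
  refine ⟨d, hd1, fun x hx => ?_⟩
  by_cases hx0 : x = 0
  · exact Or.inl hx0
  right
  have hxT : x ∈ T := Multiset.mem_filter.2 ⟨hx, hx0⟩
  rw [← hUT] at hxT
  rcases Multiset.mem_add.1 hxT with hxU | hxT'
  swap
  · exact hall x hxT'
  have hxi : ∀ i, i + 1 ≤ r → ∃ j ≤ r, j • d = x + i • d := by
    intro i hi
    refine (hmemJ _).1 ?_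
    have := hI (x ::ₘ Multiset.replicate i d) (by
      rw [← hUT, ← Multiset.singleton_add]
      exact add_le_add (Multiset.singleton_le.2 hxU) (hrep i (by omega))) (by simp; omega)
      (by simp; omega)
    rwa [Multiset.sum_cons, Multiset.sum_replicate] at this
  obtain ⟨j, hj, hjx⟩ := hxi 0 (by omega)
  rw [zero_smul, add_zero] at hjx
  by_cases hj2 : j ≤ 1
  · interval_cases j
    · exact absurd (by simpa using hjx.symm) hx0
    · simpa using hjx.symm
  exfalso
  obtain ⟨i, hi, hix⟩ := hxi (r + 1 - j) (by omega)
  rw [← hjx, ← add_nsmul, show j + (r + 1 - j) = r + 1 by omega, nsmul_eq_mul, nsmul_eq_mul] at hix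
  have hcast : ((i : ℕ) : ZMod n) = ((r + 1 : ℕ) : ZMod n) := by
    rcases hd1 with rfl | rfl
    · simpa using hix
    · simpa [neg_inj, -Nat.cast_add] using hix
  have := congrArg ZMod.val hcast
  rw [ZMod.val_natCast_of_lt (by omega), ZMod.val_natCast_of_lt (by omega)] at this
  omega

/-- A sequence of length `n + r` over `ZMod n` whose `n`-term sums all lie in `{1, …, r + 1}`. -/
theorem ZMod.eq_replicate_add_replicate_of_sums_mem_Icc {n r : ℕ} [NeZero n] (hr : 1 ≤ r)
    (hrn : r + 3 ≤ n) (W : Multiset (ZMod n)) (hW : W.card = n + r)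
    (hn : ∀ V ≤ W, V.card = n → V.sum.val ∈ Finset.Icc 1 (r + 1)) :
    ∃ b : ZMod n, W = Multiset.replicate (n - 1) b + Multiset.replicate (r + 1) (b + 1) := by
  have hcount : ∀ x, W.count x < n := by
    intro x
    by_contra! hge
    have := hn (Multiset.replicate n x) (Multiset.le_count_iff_replicate_le.1 hge) (by simp)
    simp at this
  obtain ⟨c, -, hc⟩ := Finset.exists_max_image Finset.univ (fun x => W.count x)
    ⟨0, Finset.mem_univ (0 : ZMod n)⟩
  have hinj : Function.Injective (fun x : ZMod n => x - c) := sub_left_injective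
  have hcnt : ∀ x, (W.map (fun x => x - c)).count x = W.count (x + c) := by
    intro x
    have := Multiset.count_map_eq_count' (fun x => x - c) W hinj (x + c)
    simpa using this
  have hsum : ∀ V : Multiset (ZMod n), (V.map (fun x => x - c)).sum = V.sum - V.card • c := by
    intro V
    rw [Multiset.sum_map_sub, Multiset.map_id', Multiset.map_const', Multiset.sum_replicate]
  obtain ⟨d, hd, hmem⟩ := ZMod.eq_zero_or_eq_of_sums_mem_interval_of_count_le hr hrn
    (W.map (fun x => x - c)) (by simpa using hW)
    (fun x => by
      rw [hcnt, hcnt, zero_add]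
      exact hc _ (Finset.mem_univ _))
    (fun V hV hVc h0 => by
      obtain ⟨V', hV', rfl⟩ := Multiset.exists_le_map_eq_of_le_map _ _ _ hV
      rw [Multiset.card_map] at hVc
      have := hn V' hV' hVc
      rw [hsum, hVc] at h0
      simp only [nsmul_eq_mul, CharP.cast_eq_zero, zero_mul, sub_zero] at h0
      simp [h0] at this)
    (W.sum - r • c - ((r + 1 : ℕ) : ZMod n))
    (fun V hV hVc => by
      obtain ⟨V', hV', rfl⟩ := Multiset.exists_le_map_eq_of_le_map _ _ _ hV
      rw [Multiset.card_map] at hVc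
      have hsplit : V' + (W - V') = W := add_tsub_cancel_of_le hV'
      have h1 : (W - V').card = n := by
        have := congrArg Multiset.card hsplit
        rw [Multiset.card_add] at this
        omega
      have h2 := Finset.mem_Icc.1 (hn (W - V') tsub_le_self h1)
      have h3 : W.sum = V'.sum + (W - V').sum := by rw [← Multiset.sum_add, hsplit]
      have h4 : V'.sum - r • c - (W.sum - r • c - ((r + 1 : ℕ) : ZMod n)) =
          ((r + 1 - (W - V').sum.val : ℕ) : ZMod n) := by
        rw [Nat.cast_sub h2.2, ZMod.natCast_zmod_val, h3]
        ring
      rw [hsum, hVc, h4, ZMod.val_natCast_of_lt (by omega)]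
      omega)
  obtain ⟨b, hb⟩ : ∃ b, ∀ x ∈ W, x = b ∨ x = b + 1 := by
    rcases hd with rfl | rfl
    · refine ⟨c, fun x hx => ?_⟩
      rcases hmem _ (Multiset.mem_map_of_mem _ hx) with h | h
      · exact Or.inl (sub_eq_zero.1 h)
      · right; rw [← h]; ring
    · refine ⟨c - 1, fun x hx => ?_⟩
      rcases hmem _ (Multiset.mem_map_of_mem _ hx) with h | h
      · right; rw [sub_eq_zero.1 h]; ring
      · left; rw [← sub_add_cancel x c, h]; ring
  have hWeq : W = Multiset.replicate (W.count b) b +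
      Multiset.replicate (W.filter (fun x => ¬ x = b)).card (b + 1) := by
    conv_lhs => rw [← Multiset.filter_add_not (fun x => x = b) W, Multiset.filter_eq']
    congr 1
    refine Multiset.eq_replicate_card.2 fun x hx => ?_
    obtain ⟨hx, hxb⟩ := Multiset.mem_filter.1 hx
    exact (hb x hx).resolve_left hxb
  set t := (W.filter (fun x => ¬ x = b)).card with ht
  have hst : W.count b + t = n + r := by
    rw [← hW]
    conv_rhs => rw [hWeq]
    simp
  have htn : t < n := by
    refine lt_of_le_of_lt ?_ (hcount (b + 1))
    rw [Multiset.le_count_iff_replicate_le]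
    conv_rhs => rw [hWeq]
    exact Multiset.le_add_left _ _
  have hsn := hcount b
  have hle : Multiset.replicate (n - t) b + Multiset.replicate t (b + 1) ≤ W := by
    conv_rhs => rw [hWeq]
    exact add_le_add ((Multiset.replicate_le_replicate b).2 (by omega)) le_rfl
  have hts := hn _ hle (by simp; omega)
  have hs : (Multiset.replicate (n - t) b + Multiset.replicate t (b + 1)).sum = (t : ZMod n) := by
    rw [Multiset.sum_add, Multiset.sum_replicate, Multiset.sum_replicate, nsmul_add, ← add_assoc,
      ← add_nsmul, Nat.sub_add_cancel htn.le]
    simp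
  rw [hs, ZMod.val_natCast_of_lt htn, Finset.mem_Icc] at hts
  refine ⟨b, ?_⟩
  rw [hWeq, show W.count b = n - 1 by omega, show t = r + 1 by omega]

/-- No sequence of length `n + r + 1` over `ZMod n` has all its `n`-term sums
in `{1, …, r + 1}`. -/
theorem ZMod.card_le_of_sums_mem_Icc {n r : ℕ} [NeZero n] (hr : 1 ≤ r)
    (hrn : r + 3 ≤ n) (W : Multiset (ZMod n))
    (hn : ∀ V ≤ W, V.card = n → V.sum.val ∈ Finset.Icc 1 (r + 1)) : W.card ≤ n + r := by
  by_contra! hlt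
  obtain ⟨W₁, hW₁, hW₁c⟩ := Multiset.exists_le_card_eq_of_le_card W (n + r + 1) hlt
  obtain ⟨x, hx⟩ := Multiset.card_pos_iff_exists_mem.1 (show 0 < W₁.card by omega)
  obtain ⟨Y, rfl⟩ := Multiset.exists_cons_of_mem hx
  have hYW : Y ≤ W := (Multiset.le_cons_self Y x).trans hW₁
  obtain ⟨b, hb⟩ := ZMod.eq_replicate_add_replicate_of_sums_mem_Icc hr hrn Y
    (by simpa using hW₁c) (fun V hV => hn V (hV.trans hYW))
  have key : ∀ j ≤ r + 1, (x - b + (j : ZMod n)).val ∈ Finset.Icc 1 (r + 1) := by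
    intro j hj
    have := hn (x ::ₘ (Multiset.replicate (n - 1 - j) b + Multiset.replicate j (b + 1)))
      ((Multiset.cons_le_cons x (by
        rw [hb]
        exact add_le_add ((Multiset.replicate_le_replicate _).2 (by omega))
          ((Multiset.replicate_le_replicate _).2 hj))).trans hW₁)
      (by simp; omega)
    have hs : (x ::ₘ (Multiset.replicate (n - 1 - j) b + Multiset.replicate j (b + 1))).sum =
        x - b + j := by
      have h0 : (n - 1 - j) • b + (j • b + b) = 0 := by
        rw [← succ_nsmul, ← add_nsmul, show n - 1 - j + (j + 1) = n by omega]
        simp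
      have h1 : (n - 1 - j) • b + j • b = -b := by
        rw [eq_neg_iff_add_eq_zero, ← h0, add_assoc]
      rw [Multiset.sum_cons, Multiset.sum_add, Multiset.sum_replicate, Multiset.sum_replicate,
        nsmul_add, ← add_assoc ((n - 1 - j) • b), h1, nsmul_eq_mul, mul_one]
      ring
    rwa [hs] at this
  have h0 := Finset.mem_Icc.1 (key 0 (by omega))
  rw [Nat.cast_zero, add_zero] at h0
  have h1 := Finset.mem_Icc.1 (key (r + 2 - (x - b).val) (by omega))
  have h2 : x - b + ((r + 2 - (x - b).val : ℕ) : ZMod n) = ((r + 2 : ℕ) : ZMod n) := by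
    rw [Nat.cast_sub (by omega), ZMod.natCast_zmod_val]
    ring
  rw [h2, ZMod.val_natCast_of_lt (by omega)] at h1
  omega

theorem isBasis_of_sums_ne_zero {n : ℕ} [NeZero n] (k : ℕ) (hkn : k + 1 ≤ n)
    (e f : ZMod n × ZMod n)
    (hz : ∀ T ≤ Multiset.replicate (n - 1) e + Multiset.replicate (n - 1) f +
      Multiset.replicate k (e + f), T ≠ 0 → T.card ≤ 2 * n - 1 - k → T.sum ≠ 0) :
    IsBasis e f := by
  have hker : ∀ x y : ZMod n, x • e + y • f = 0 → x = 0 ∧ y = 0 := by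
    intro x y hxy
    by_contra hne
    have hpos : 0 < x.val + y.val := by
      by_contra! hle
      exact hne ⟨(ZMod.val_eq_zero x).1 (by omega), (ZMod.val_eq_zero y).1 (by omega)⟩
    have hx := ZMod.val_lt x
    have hy := ZMod.val_lt y
    obtain ⟨l, hlx, hly, hlk, hl⟩ : ∃ l, l ≤ x.val ∧ l ≤ y.val ∧ l ≤ k ∧
        x.val + y.val - l ≤ 2 * n - 1 - k :=
      ⟨min (min x.val y.val) k, by omega, by omega, by omega, by omega⟩
    refine hz (Multiset.replicate (x.val - l) e + Multiset.replicate (y.val - l) f +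
      Multiset.replicate l (e + f)) ?_ ?_ ?_ ?_
    · exact add_le_add (add_le_add ((Multiset.replicate_le_replicate _).2 (by omega))
        ((Multiset.replicate_le_replicate _).2 (by omega)))
        ((Multiset.replicate_le_replicate _).2 hlk)
    · rw [← Multiset.card_pos]; simp only [Multiset.card_add, Multiset.card_replicate]; omega
    · simp only [Multiset.card_add, Multiset.card_replicate]; omega
    · simp only [Multiset.sum_add, Multiset.sum_replicate, nsmul_add]
      have hcast : ∀ (z : ZMod n) (g : ZMod n × ZMod n), z • g = z.val • g := by
        intro z g
        rw [← Nat.cast_smul_eq_nsmul (ZMod n), ZMod.natCast_zmod_val]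
      rw [← hxy, hcast x, hcast y]
      conv_rhs => rw [← Nat.sub_add_cancel hlx, ← Nat.sub_add_cancel hly, add_nsmul, add_nsmul]
      abel
  refine Finite.injective_iff_bijective.1 fun p p' hpp => ?_
  have := hker (p.1 - p'.1) (p.2 - p'.2) (by
    rw [sub_smul, sub_smul, sub_add_sub_comm, hpp, sub_self])
  exact Prod.ext (sub_eq_zero.1 this.1) (sub_eq_zero.1 this.2)

theorem stmt6 {n : ℕ} (hn : 4 ≤ n) (k : ℕ) (hk2 : 2 ≤ k) (hkn : k ≤ n - 2)
    (S : Multiset (ZMod n × ZMod n)) (hcard : Multiset.card S = 2 * n - 2 + k)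
    (hzs : ∀ T ≤ S, T ≠ 0 → Multiset.card T ≤ 2 * n - 1 - k → T.sum ≠ 0)
    (e1 e2 : ZMod n × ZMod n)
    (hsupp : ∀ g ∈ S, g = e1 ∨ ∃ a : ZMod n, g = a • e1 + e2) :
    ∃ f2 : ZMod n × ZMod n, (∃ a : ZMod n, f2 = a • e1 + e2) ∧ IsBasis e1 f2 ∧
      S = Multiset.replicate (n - 1) e1 + Multiset.replicate (n - 1) f2 +
            Multiset.replicate k (e1 + f2) := by
  have : NeZero n := ⟨by omega⟩
  have hntor : ∀ g : ZMod n × ZMod n, n • g = 0 := fun g => by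
    rw [← Nat.cast_smul_eq_nsmul (ZMod n), CharP.cast_eq_zero, zero_smul]
  have hm : S.count e1 < n := by
    by_contra! hge
    refine hzs (Multiset.replicate n e1) (Multiset.le_count_iff_replicate_le.1 hge) ?_ ?_ ?_
    · rw [← Multiset.card_pos, Multiset.card_replicate]; omega
    · rw [Multiset.card_replicate]; omega
    · rw [Multiset.sum_replicate, hntor]
  set m := S.count e1 with hmdef
  set W := S.filter (fun g => ¬ g = e1) with hWdef
  have hS : Multiset.replicate m e1 + W = S := by
    rw [hmdef, ← Multiset.filter_eq', hWdef]
    exact Multiset.filter_add_not _ S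
  have hWc : m + W.card = 2 * n - 2 + k := by
    rw [← hcard, ← hS, Multiset.card_add, Multiset.card_replicate]
  obtain ⟨a, ha⟩ : ∃ a : ZMod n × ZMod n → ZMod n, ∀ g ∈ W, a g • e1 + e2 = g := by
    have : ∀ g, ∃ a : ZMod n, g ∈ W → a • e1 + e2 = g := by
      intro g
      by_cases hg : g ∈ W
      · obtain ⟨hgS, hge⟩ := Multiset.mem_filter.1 hg
        obtain ⟨a, rfl⟩ := (hsupp g hgS).resolve_left hge
        exact ⟨a, fun _ => rfl⟩
      · exact ⟨0, fun h => absurd h hg⟩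
    choose a ha using this
    exact ⟨a, ha⟩
  have hback : ∀ V ≤ W, (V.map a).map (fun x => x • e1 + e2) = V := by
    intro V hV
    rw [Multiset.map_map]
    conv_rhs => rw [← Multiset.map_id V]
    exact Multiset.map_congr rfl fun g hg => ha g (Multiset.mem_of_le hV hg)
  have hsum : ∀ A : Multiset (ZMod n), (A.map (fun x => x • e1 + e2)).sum =
      A.sum • e1 + A.card • e2 := by
    intro A
    rw [Multiset.sum_map_add, Multiset.map_const', Multiset.sum_replicate, Multiset.sum_smul]
  have havoid : ∀ V ≤ W.map a, V.card = n → ∀ j ≤ m, j ≤ n - 1 - k →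
      V.sum + (j : ZMod n) ≠ 0 := by
    intro V hV hVc j hjm hjk h0
    obtain ⟨V', hV', rfl⟩ := Multiset.exists_le_map_eq_of_le_map _ _ _ hV
    have hVs := hsum (V'.map a)
    rw [hback V' hV', hVc, hntor, add_zero] at hVs
    rw [Multiset.card_map] at hVc
    refine hzs (Multiset.replicate j e1 + V') ?_ ?_ ?_ ?_
    · rw [← hS]
      exact add_le_add ((Multiset.replicate_le_replicate _).2 hjm) hV'
    · rw [← Multiset.card_pos, Multiset.card_add]; omega
    · rw [Multiset.card_add, Multiset.card_replicate]; omega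
    · rw [Multiset.sum_add, Multiset.sum_replicate, hVs, ← Nat.cast_smul_eq_nsmul (ZMod n),
        ← add_smul, add_comm, h0, zero_smul]
  have hm0 : 1 ≤ m := by
    by_contra! hm0
    obtain ⟨V, hV, hVc, hVs⟩ := ZMod.erdos_ginzburg_ziv_multiset (W.map a)
      (by rw [Multiset.card_map]; omega)
    exact havoid V hV hVc 0 (by omega) (by omega) (by simpa using hVs)
  -- `r + 1` bounds the values of the `n`-term sums
  obtain ⟨r, hr⟩ : ∃ r, r + 2 + min m (n - 1 - k) = n := ⟨n - 2 - min m (n - 1 - k), by omega⟩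
  have hIcc : ∀ V ≤ W.map a, V.card = n → V.sum.val ∈ Finset.Icc 1 (r + 1) := by
    intro V hV hVc
    have hlt := ZMod.val_lt V.sum
    rw [Finset.mem_Icc]
    by_contra hne
    by_cases h0 : V.sum.val = 0
    · refine havoid V hV hVc 0 (by omega) (by omega) ?_
      simpa using h0
    · refine havoid V hV hVc (n - V.sum.val) (by omega) (by omega) ?_
      rw [Nat.cast_sub hlt.le, ZMod.natCast_zmod_val]
      simp
  have hle := ZMod.card_le_of_sums_mem_Icc (by omega) (by omega) (W.map a) hIcc
  rw [Multiset.card_map] at hle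
  have hrk : r + 1 = k := by omega
  obtain ⟨b, hb⟩ := ZMod.eq_replicate_add_replicate_of_sums_mem_Icc (by omega) (by omega)
    (W.map a) (by rw [Multiset.card_map]; omega) hIcc
  have hW := hback W le_rfl
  rw [hb, Multiset.map_add, Multiset.map_replicate, Multiset.map_replicate, hrk, add_smul,
    one_smul, add_comm _ e1, add_assoc e1] at hW
  have hSeq : S = Multiset.replicate (n - 1) e1 + Multiset.replicate (n - 1) (b • e1 + e2) +
      Multiset.replicate k (e1 + (b • e1 + e2)) := by
    rw [← hS, ← hW, show m = n - 1 by omega, add_assoc]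
  exact ⟨b • e1 + e2, ⟨b, rfl⟩, isBasis_of_sums_ne_zero k (by omega) _ _ (hSeq ▸ hzs), hSeq⟩
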